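/- Let a and b be real constants such that either (1) a = 1 and 1 ≤ b ≤ 4, or (2) 1 < a ≤ b and b ≤ 3 and b ≤ 1 + a and b ≤ 4a/(5a − 4). Then the supremum of Im(z F(a,b;a+b;z)) over z ∈ 𝔻 equals exactly π/(2 B(a,b)); in particular, the bounding lines Im w = ±π/(2B(a,b)) of the image strip are optimal. -/

import Mathlib

open Complex Filter MeasureTheory Metric Set

/-- The Gaussian hypergeometric function on the unit disc (power series). -/
noncomputable def hyperF (a b c : ℝ) (z : ℂ) : ℂ :=
  ∑' n : ℕ, (((ascPochhammer ℝ n).eval a * (ascPochhammer ℝ n).eval b /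
      ((ascPochhammer ℝ n).eval c * (n.factorial : ℝ)) : ℝ) : ℂ) * z ^ n

/-- Nonnegative, nonincreasing, convex sequences. -/
def NDC (u : ℕ → ℝ) : Prop :=
  (∀ k, 0 ≤ u k) ∧ (∀ k, u (k+1) ≤ u k) ∧ (∀ k, 0 ≤ u k - 2 * u (k+1) + u (k+2))

lemma NDC.mul {u p : ℕ → ℝ} (hu : NDC u) (hp : NDC p) : NDC (fun k => u k * p k) := by
  obtain ⟨u0, u1, u2⟩ := hu
  obtain ⟨p0, p1, p2⟩ := hp
  refine ⟨fun k => mul_nonneg (u0 k) (p0 k),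
    fun k => mul_le_mul (u1 k) (p1 k) (p0 _) (u0 _), fun k => ?_⟩
  show 0 ≤ u k * p k - 2 * (u (k+1) * p (k+1)) + u (k+2) * p (k+2)
  have h1 := mul_nonneg (u2 k) (p0 k)
  have h2 := mul_nonneg (u0 (k+2)) (p2 k)
  have h3 := mul_nonneg (sub_nonneg.2 (u1 (k+1))) (sub_nonneg.2 (p1 k))
  nlinarith

lemma NDC_pow {r : ℝ} (h0 : 0 ≤ r) (h1 : r ≤ 1) : NDC (fun k => r ^ k) := by
  refine ⟨fun k => by positivity, fun k => pow_le_pow_of_le_one h0 h1 (Nat.le_succ k), fun k => ?_⟩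
  have : r ^ k - 2 * r ^ (k+1) + r ^ (k+2) = r ^ k * (1 - r) ^ 2 := by ring
  show 0 ≤ r ^ k - 2 * r ^ (k+1) + r ^ (k+2)
  rw [this]; positivity

lemma NDC_inv : NDC (fun k => 1 / ((k:ℝ) + 1)) := by
  refine ⟨fun k => by positivity, fun k => ?_, fun k => ?_⟩
  · apply one_div_le_one_div_of_le (by positivity); push_cast; linarith
  · have : (1 / ((k:ℝ) + 1) - 2 * (1 / (((k+1:ℕ):ℝ) + 1)) + 1 / (((k+2:ℕ):ℝ) + 1))
      = 2 / (((k:ℝ)+1)*(k+2)*(k+3)) := by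
      push_cast; field_simp; ring
    show 0 ≤ (1 / ((k:ℝ) + 1) - 2 * (1 / (((k+1:ℕ):ℝ) + 1)) + 1 / (((k+2:ℕ):ℝ) + 1))
    rw [this]; positivity

lemma NDC.le_zero {u : ℕ → ℝ} (hu : NDC u) (k : ℕ) : u k ≤ u 0 :=
  antitone_nat_of_succ_le hu.2.1 (Nat.zero_le k)

lemma sin_nat_le {θ : ℝ} (h0 : 0 ≤ Real.sin θ) (n : ℕ) : Real.sin (n * θ) ≤ n * Real.sin θ := by
  have : |Real.sin (n * θ)| ≤ n * Real.sin θ := by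
    induction n with
    | zero => simp
    | succ n ih =>
      push_cast
      rw [add_mul, one_mul, Real.sin_add]
      calc _ ≤ |Real.sin (n*θ) * Real.cos θ| + |Real.cos (n*θ) * Real.sin θ| := abs_add_le _ _
        _ ≤ |Real.sin (n*θ)| + Real.sin θ := by
          rw [abs_mul, abs_mul, abs_of_nonneg h0]
          gcongr
          · exact mul_le_of_le_one_right (abs_nonneg _) (Real.abs_cos_le_one _)
          · exact mul_le_of_le_one_left h0 (Real.abs_cos_le_one _)
        _ ≤ _ := by linarith
  exact (le_abs_self _).trans this

/-- Sine series with nice coefficients are nonnegative. -/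
lemma sine_nonneg {v : ℕ → ℝ} (hv : NDC v) (hs : Summable v) (hs' : Summable (fun k : ℕ => k * v k))
    {θ : ℝ} (h0 : 0 ≤ Real.sin θ) :
    0 ≤ ∑' k : ℕ, v k * Real.sin ((k + 1 : ℕ) * θ) := by
  have S : ∀ m : ℕ, Summable (fun k => v k * Real.sin ((k + m : ℕ) * θ)) := by
    intro m
    apply Summable.of_norm_bounded hs
    intro k
    rw [Real.norm_eq_abs, abs_mul, abs_of_nonneg (hv.1 k)]
    exact mul_le_of_le_one_right (hv.1 k) (Real.abs_sin_le_one _)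
  have hsA : Summable (fun k : ℕ => ((k:ℝ)+2) * v k) := by
    simpa [add_mul] using hs'.add (hs.mul_left 2)
  have hs1 := (summable_nat_add_iff 1).2 hs
  have hs1' := (summable_nat_add_iff 1).2 hs'
  have hs2' := (summable_nat_add_iff 2).2 hs'
  have e1 := hs.sum_add_tsum_nat_add 1
  have e2 := hs'.sum_add_tsum_nat_add 1
  have e3 := hs'.sum_add_tsum_nat_add 2
  simp [Finset.sum_range_succ] at e1 e2 e3
  -- total of weights
  have hW : HasSum (fun k : ℕ => (v k - 2 * v (k+1) + v (k+2)) * ((k + 2 : ℕ) : ℝ)) (2 * v 0 - v 1) := by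
    have H := ((hs'.hasSum.add (hs.hasSum.mul_left 2)).sub
      ((hs1'.hasSum.add hs1.hasSum).mul_left 2)).add hs2'.hasSum
    have e5 : (2 * v 0 - v 1) = (∑' (b : ℕ), ↑b * v b + 2 * ∑' (b : ℕ), v b - 2 * (∑' (b : ℕ), ↑(b + 1) * v (b + 1) + ∑' (b : ℕ), v (b + 1)) +
      ∑' (b : ℕ), ↑(b + 2) * v (b + 2)) := by
      push_cast
      linarith
    rw [e5]
    have e6 : (fun k : ℕ => (v k - 2 * v (k+1) + v (k+2)) * ((k + 2 : ℕ) : ℝ)) = _ := funext fun k => by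
      show _ = (k:ℝ) * v k + 2 * v k - 2 * (((k + 1:ℕ):ℝ) * v (k + 1) + v (k + 1)) + ((k + 2:ℕ):ℝ) * v (k + 2)
      push_cast; ring
    rw [e6]
    exact H
  have hsin : Summable (fun k : ℕ => (v k - 2 * v (k+1) + v (k+2)) * Real.sin ((k + 2 : ℕ) * θ)) := by
    have a1 := S 2
    have a2 := ((summable_nat_add_iff 1).2 (S 1)).mul_left 2
    have a3 := (summable_nat_add_iff 2).2 (S 0)
    refine ((a1.sub a2).add a3).congr ?_
    intro k
    simp only [Nat.add_assoc, Nat.reduceAdd, add_zero]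
    ring
  have hle : ∑' k : ℕ, (v k - 2 * v (k+1) + v (k+2)) * Real.sin ((k + 2 : ℕ) * θ)
      ≤ (2 * v 0 - v 1) * Real.sin θ := by
    rw [← (hW.mul_right (Real.sin θ)).tsum_eq]
    apply hsin.tsum_le_tsum _ (hW.mul_right _).summable
    intro k
    rw [mul_assoc]
    exact mul_le_mul_of_nonneg_left (sin_nat_le h0 _) (hv.2.2 k)
  -- identity
  have b1 := (S 0).sum_add_tsum_nat_add 2
  have b2 := (S 1).sum_add_tsum_nat_add 1
  have hid : ∑' k : ℕ, (v k - 2 * v (k+1) + v (k+2)) * Real.sin ((k + 2 : ℕ) * θ)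
      = (∑' k : ℕ, v k * Real.sin ((k + 2 : ℕ) * θ)) - 2 * (∑' k : ℕ, v (k+1) * Real.sin ((k + 2 : ℕ) * θ))
       + ∑' k : ℕ, v (k+2) * Real.sin ((k + 2 : ℕ) * θ) := by
    have a1 := S 2
    have a2 := ((summable_nat_add_iff 1).2 (S 1)).mul_left 2
    have a3 := (summable_nat_add_iff 2).2 (S 0)
    rw [← tsum_mul_left, ← a1.tsum_sub, ← Summable.tsum_add]
    · congr 1; ext k; ring
    · exact a1.sub a2
    · exact a3
    · exact a2
  have htrig : (∑' k : ℕ, v k * Real.sin ((k + 2 : ℕ) * θ)) + ∑' k : ℕ, v k * Real.sin ((k + 0 : ℕ) * θ)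
      = 2 * Real.cos θ * ∑' k : ℕ, v k * Real.sin ((k + 1 : ℕ) * θ) := by
    rw [← tsum_mul_left, ← (S 2).tsum_add (S 0)]
    congr 1; ext k
    have : ((k+2:ℕ):ℝ) * θ = ((k+1:ℕ):ℝ) * θ + θ := by push_cast; ring
    have h2 : ((k+0:ℕ):ℝ) * θ = ((k+1:ℕ):ℝ) * θ - θ := by push_cast; ring
    rw [this, h2, Real.sin_add, Real.sin_sub]; ring
  simp [Finset.sum_range_succ] at b1 b2
  simp at hid htrig hle ⊢
  have e4 : ∀ k : ℕ, ((k:ℝ)+1+1) = k + 2 := fun k => by ring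
  simp only [e4] at b2
  rw [hid] at hle
  set X := ∑' k : ℕ, v k * Real.sin ((k + 1 ) * θ)
  have key : 0 ≤ (1 - Real.cos θ) * X := by nlinarith
  rcases eq_or_lt_of_le (Real.cos_le_one θ) with hc | hc
  · have hs0 : Real.sin θ = 0 := by nlinarith [Real.sin_sq_add_cos_sq θ]
    have : ∀ k : ℕ, Real.sin ((k+1)*θ) = 0 := by
      intro k
      have hz : |Real.sin ((k+1)*θ)| ≤ 0 := by
        have x1 := sin_nat_le h0 (k+1)
        have x2 := sin_nat_le (θ := -θ) (by rw [Real.sin_neg, hs0]; simp) (k+1)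
        rw [Real.sin_neg, mul_neg, Real.sin_neg] at x2
        push_cast at x1 x2
        rw [hs0] at x1 x2
        rw [abs_le]; constructor <;> linarith
      exact abs_nonpos_iff.1 hz
    simp [X, this]
  · exact nonneg_of_mul_nonneg_right key (by linarith)

lemma summable_pow_mul {u : ℕ → ℝ} {M : ℝ} (hu : ∀ k, |u k| ≤ M) {z : ℂ} (hz : ‖z‖ < 1) :
    Summable (fun k : ℕ => (u k : ℂ) * z ^ (k+1)) := by
  have : Summable (fun k : ℕ => M * ‖z‖ ^ (k+1)) :=
    ((summable_nat_add_iff 1).2 (summable_geometric_of_lt_one (norm_nonneg z) hz)).mul_left M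
  apply Summable.of_norm_bounded this
  intro k
  rw [norm_mul, norm_pow, Complex.norm_real]
  gcongr
  exact hu k

lemma im_nonneg_of_NDC {u : ℕ → ℝ} (hu : NDC u) {z : ℂ} (hz : ‖z‖ < 1) (him : 0 ≤ z.im) :
    0 ≤ (∑' k : ℕ, (u k : ℂ) * z ^ (k+1)).im := by
  have hub : ∀ k, |u k| ≤ u 0 := fun k => by rw [abs_of_nonneg (hu.1 k)]; exact hu.le_zero k
  have hr := norm_nonneg z
  set r := ‖z‖ with hrd
  have hz' : z = r * (Real.cos z.arg + Real.sin z.arg * I) := by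
    rw [hrd]; push_cast; exact (Complex.norm_mul_cos_add_sin_mul_I z).symm
  have hpow : ∀ n : ℕ, (z ^ n).im = r ^ n * Real.sin (n * z.arg) := by
    intro n
    conv_lhs => rw [hz']
    rw [mul_pow]
    push_cast
    rw [Complex.cos_add_sin_mul_I_pow, ← Complex.ofReal_pow, Complex.im_ofReal_mul]
    congr 1
    have e1 : ((n:ℂ) * (z.arg : ℂ)) = ((n * z.arg : ℝ) : ℂ) := by push_cast; rfl
    rw [e1, ← Complex.ofReal_cos, ← Complex.ofReal_sin, Complex.add_im, Complex.ofReal_im,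
      Complex.im_ofReal_mul, Complex.I_im]
    ring
  have hsin : 0 ≤ Real.sin z.arg :=
    Real.sin_nonneg_of_nonneg_of_le_pi (Complex.arg_nonneg_iff.2 him) (Complex.arg_le_pi z)
  rw [Complex.im_tsum (summable_pow_mul hub hz)]
  have hterm : ∀ k : ℕ, ((u k : ℂ) * z ^ (k+1)).im
      = r * ((u k * r ^ k) * Real.sin ((k+1:ℕ) * z.arg)) := by
    intro k
    rw [Complex.im_ofReal_mul, hpow]; ring
  simp_rw [hterm]
  rw [tsum_mul_left]
  refine mul_nonneg hr (sine_nonneg (hu.mul (NDC_pow hr hz.le)) ?_ ?_ hsin)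
  · apply Summable.of_norm_bounded ((summable_geometric_of_lt_one hr hz).mul_left (u 0))
    intro k
    rw [norm_mul, Real.norm_eq_abs, Real.norm_eq_abs, abs_of_nonneg (pow_nonneg hr k)]
    gcongr
    exact hub k
  · have := summable_pow_mul_geometric_of_norm_lt_one (R := ℝ) 1 (r := r)
      (by rwa [Real.norm_eq_abs, abs_of_nonneg hr])
    apply Summable.of_norm_bounded (this.mul_left (u 0))
    intro k
    rw [norm_mul, norm_mul, Real.norm_eq_abs, Real.norm_eq_abs, Real.norm_eq_abs,
      abs_of_nonneg (pow_nonneg hr k), Nat.abs_cast, pow_one]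
    have := hub k
    have h2 : 0 ≤ (k:ℝ) * r ^ k := by positivity
    nlinarith

/-- Taylor coefficients. -/
noncomputable def cA (a b : ℝ) (n : ℕ) : ℝ :=
  (ascPochhammer ℝ n).eval a * (ascPochhammer ℝ n).eval b /
      ((ascPochhammer ℝ n).eval (a + b) * (n.factorial : ℝ))

lemma cA_pos {a b : ℝ} (ha : 1 ≤ a) (hb : 1 ≤ b) (n : ℕ) : 0 < cA a b n := by
  have h1 := ascPochhammer_pos n a (by linarith)
  have h2 := ascPochhammer_pos n b (by linarith)
  have h3 := ascPochhammer_pos n (a+b) (by linarith)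
  unfold cA; positivity

lemma cA_succ {a b : ℝ} (ha : 1 ≤ a) (hb : 1 ≤ b) (n : ℕ) :
    cA a b (n+1) = cA a b n * ((n^2 + (a+b)*n + a*b) / ((a+b+n)*(n+1))) := by
  have h3 := ascPochhammer_pos n (a+b) (by linarith)
  have h4 : 0 < a + b + n := by positivity
  unfold cA
  rw [ascPochhammer_succ_eval, ascPochhammer_succ_eval, ascPochhammer_succ_eval, Nat.factorial_succ]
  push_cast
  field_simp
  ring

lemma cA_NDC {a b : ℝ} (ha : 1 ≤ a) (hb : 1 ≤ b) (hP : a * b ≤ a + b)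
    (hk0 : a * b ≤ (a + b - a * b) * (2 * (a+b) + 2 - a * b)) : NDC (cA a b) := by
  refine ⟨fun k => (cA_pos ha hb k).le, fun k => ?_, fun k => ?_⟩
  · rw [cA_succ ha hb]
    apply mul_le_of_le_one_right (cA_pos ha hb k).le
    rw [div_le_one (by positivity)]
    nlinarith [(Nat.cast_nonneg k : (0:ℝ) ≤ k)]
  · rw [show k + 2 = (k+1)+1 from rfl, cA_succ ha hb (k+1), cA_succ ha hb k]
    have hA := cA_pos ha hb k
    have hk : (0:ℝ) ≤ k := Nat.cast_nonneg k
    push_cast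
    set x : ℝ := (k : ℝ)
    have e : cA a b k - 2 * (cA a b k * ((x^2 + (a+b)*x + a*b) / ((a+b+x)*(x+1)))) +
       cA a b k * ((x^2 + (a+b)*x + a*b) / ((a+b+x)*(x+1))) *
        (((x+1)^2 + (a+b)*(x+1) + a*b) / ((a+b+(x+1))*(x+1+1)))
       = cA a b k * ((2*x^2 + x*(3*(a+b-a*b) + (a+b)+2-a*b) + ((a + b - a * b) * (2 * (a+b) + 2 - a * b) - a*b)) /
        ((a+b+x)*(x+1)*(a+b+(x+1))*(x+2))) := by
      have : a + b + x ≠ 0 := by positivity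
      have : a + b + (x+1) ≠ 0 := by positivity
      have : x+1 ≠ 0 := by positivity
      have : x+1+1 ≠ 0 := by positivity
      have : x+2 ≠ 0 := by positivity
      field_simp
      ring
    rw [e]
    apply mul_nonneg hA.le
    apply div_nonneg _ (by positivity)
    have : 0 ≤ x*(3*(a+b-a*b) + (a+b)+2-a*b) := mul_nonneg hk (by linarith)
    nlinarith [sq_nonneg x]

lemma delta_eq {a b : ℝ} (ha : 1 ≤ a) (hb : 1 ≤ b) (k : ℕ) :
    ((k:ℝ)+2) * cA a b (k+1) - (k+1) * cA a b k
     = cA a b k * (((a*b-1)*(k+1) + (a-1)*(b-1)) / ((a+b+k)*(k+1))) := by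
  rw [cA_succ ha hb]
  have : a + b + k ≠ 0 := by positivity
  field_simp
  ring

lemma delta_nonneg {a b : ℝ} (ha : 1 ≤ a) (hb : 1 ≤ b) (k : ℕ) :
    0 ≤ ((k:ℝ)+2) * cA a b (k+1) - (k+1) * cA a b k := by
  rw [delta_eq ha hb]
  have := cA_pos ha hb k
  have : 0 ≤ a * b - 1 := by nlinarith
  have : 0 ≤ (a-1)*(b-1) := mul_nonneg (by linarith) (by linarith)
  positivity

lemma delta_anti {a b : ℝ} (ha : 1 ≤ a) (hb : 1 ≤ b) (hq : (a-1)*(b-1) ≤ 2) (k : ℕ) :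
    ((k:ℝ)+3) * cA a b (k+2) - (k+2) * cA a b (k+1)
    ≤ ((k:ℝ)+2) * cA a b (k+1) - (k+1) * cA a b k := by
  have h1 := delta_eq ha hb (k+1)
  have h0 := delta_eq ha hb k
  push_cast at h1
  have e3 : ((k:ℝ)+3) * cA a b (k+2) - (k+2) * cA a b (k+1)
     = (k+1+2) * cA a b (k+1+1) - (k+1+1) * cA a b (k+1) := by
    rw [show k + 2 = k+1+1 from rfl]; ring
  rw [e3, h1, h0, cA_succ ha hb, ← sub_nonneg]
  have hA := cA_pos ha hb k
  have hk : (0:ℝ) ≤ k := Nat.cast_nonneg k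
  have hm : 0 ≤ a * b - 1 := by nlinarith
  have hq0 : 0 ≤ (a-1)*(b-1) := mul_nonneg (by linarith) (by linarith)
  set x : ℝ := (k : ℝ)
  obtain ⟨m, hmd⟩ : ∃ m, m = a * b - 1 := ⟨_, rfl⟩
  obtain ⟨q, hqd⟩ : ∃ q, q = (a-1)*(b-1) := ⟨_, rfl⟩
  have hS : a + b = m + 2 - q := by rw [hmd, hqd]; ring
  have hab : a * b = m + 1 := by rw [hmd]; ring
  rw [← hqd, ← hmd, hS, hab]
  have hS2 : 2 ≤ m + 2 - q := by linarith
  rw [← hqd] at hq hq0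
  rw [← hmd] at hm
  have e : cA a b k * ((m * (x+1) + q) / ((m+2-q + x) * (x+1))) -
     cA a b k * ((x^2 + (m+2-q)*x + (m+1)) / ((m+2-q+x)*(x+1))) *
      ((m * (x+1+1) + q) / ((m+2-q + (x+1)) * (x+1+1)))
     = cA a b k * ((2*m*(x+1)^2 + m*(x+1)*(2-q) + q*(3*(x+1) + (m+2-q) - q) - m*q) /
        ((m+2-q+x)*(x+1)*(m+2-q+(x+1))*(x+2))) := by
    have : m+2-q + x ≠ 0 := by positivity
    have : m+2-q + (x+1) ≠ 0 := by positivity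
    have : x+1 ≠ 0 := by positivity
    have : x+1+1 ≠ 0 := by positivity
    have : x+2 ≠ 0 := by positivity
    field_simp
    ring
  rw [e]
  apply mul_nonneg hA.le
  apply div_nonneg _ (by positivity)
  have t1 : 0 ≤ m*(x+1)*(2-q) := mul_nonneg (by positivity) (by linarith)
  have t2 : 0 ≤ q*(3*(x+1) + (m+2-q) - q) := mul_nonneg hq0 (by linarith)
  have t3 : 0 ≤ m * (2 - q) := mul_nonneg hm (by linarith)
  have t4 : 0 ≤ m * (x^2+2*x) := by positivity
  nlinarith

lemma prod_asc (s : ℝ) (n : ℕ) : ∏ j ∈ Finset.range n, (s + j) = (ascPochhammer ℝ n).eval s := by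
  induction n with
  | zero => simp
  | succ n ih => rw [Finset.prod_range_succ, ih, ascPochhammer_succ_eval]

lemma c_tendsto {a b : ℝ} (ha : 1 ≤ a) (hb : 1 ≤ b) :
    Tendsto (fun k : ℕ => ((k:ℝ)+1) * cA a b k) atTop
      (nhds (Real.Gamma (a+b) / (Real.Gamma a * Real.Gamma b))) := by
  rw [← tendsto_add_atTop_iff_nat 1]
  have ga := Real.GammaSeq_tendsto_Gamma a
  have gb := Real.GammaSeq_tendsto_Gamma b
  have gc := Real.GammaSeq_tendsto_Gamma (a+b)
  have pa := Real.Gamma_pos_of_pos (show 0 < a by linarith)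
  have pb := Real.Gamma_pos_of_pos (show 0 < b by linarith)
  have h1 : Tendsto (fun n : ℕ => 1 + 1 / ((n:ℝ) + 1)) atTop (nhds (1 + 0)) :=
    tendsto_const_nhds.add tendsto_one_div_add_atTop_nhds_zero_nat
  have H := (gc.div (ga.mul gb) (by positivity)).mul h1
  rw [add_zero, mul_one] at H
  refine H.congr' ?_
  filter_upwards [eventually_gt_atTop 0] with n hn
  have hn' : (0:ℝ) < n := by exact_mod_cast hn
  simp only [Real.GammaSeq, Pi.div_apply, Pi.mul_apply]
  rw [prod_asc, prod_asc, prod_asc, Real.rpow_add hn']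
  have q1 := ascPochhammer_pos (n+1) a (by linarith)
  have q2 := ascPochhammer_pos (n+1) b (by linarith)
  have q3 := ascPochhammer_pos (n+1) (a+b) (by linarith)
  have r1 := Real.rpow_pos_of_pos hn' a
  have r2 := Real.rpow_pos_of_pos hn' b
  unfold cA
  rw [Nat.factorial_succ]
  push_cast
  have : (n.factorial : ℝ) ≠ 0 := by positivity
  field_simp

lemma c_le {a b : ℝ} (ha : 1 ≤ a) (hb : 1 ≤ b) (k : ℕ) :
    ((k:ℝ)+1) * cA a b k ≤ Real.Gamma (a+b) / (Real.Gamma a * Real.Gamma b) := by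
  have hm : Monotone (fun k : ℕ => ((k:ℝ)+1) * cA a b k) := by
    apply monotone_nat_of_le_succ
    intro k
    have := delta_nonneg ha hb k
    push_cast
    linarith
  exact hm.ge_of_tendsto (c_tendsto ha hb) k

/-- The remainder coefficients. -/
noncomputable def cE (a b : ℝ) (k : ℕ) : ℝ :=
  (Real.Gamma (a+b) / (Real.Gamma a * Real.Gamma b) - ((k:ℝ)+1) * cA a b k) * (1 / ((k:ℝ)+1))

lemma cE_eq (a b : ℝ) (k : ℕ) :
    cE a b k = Real.Gamma (a+b) / (Real.Gamma a * Real.Gamma b) / ((k:ℝ)+1) - cA a b k := by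
  unfold cE
  have : (k:ℝ)+1 ≠ 0 := by positivity
  generalize Real.Gamma (a+b) / (Real.Gamma a * Real.Gamma b) = C
  field_simp

lemma cE_NDC {a b : ℝ} (ha : 1 ≤ a) (hb : 1 ≤ b) (hq : (a-1)*(b-1) ≤ 2) : NDC (cE a b) := by
  refine NDC.mul ⟨fun k => sub_nonneg.2 (c_le ha hb k), fun k => ?_, fun k => ?_⟩ NDC_inv
  · have := delta_nonneg ha hb k
    push_cast; linarith
  · have := delta_anti ha hb hq k
    push_cast; linarith

lemma cE_summable {a b : ℝ} (ha : 1 ≤ a) (hb : 1 ≤ b) : Summable (cE a b) := by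
  set C := Real.Gamma (a+b) / (Real.Gamma a * Real.Gamma b) with hC
  have hC0 : 0 ≤ C := le_trans (by have := cA_pos ha hb 0; positivity) (c_le ha hb 0)
  set N := C * (2 * (a * b))
  have hN0 : 0 ≤ N := by positivity
  have hd : ∀ k : ℕ, ((k:ℝ)+2) * cA a b (k+1) - (k+1) * cA a b k ≤ N / ((k:ℝ)+1)^2 := by
    intro k
    rw [delta_eq ha hb]
    have hA := cA_pos ha hb k
    have h1 : cA a b k ≤ C / (k+1) := by
      rw [le_div_iff₀ (by positivity)]; linarith [c_le ha hb k]
    have hP : 1 ≤ a * b := by nlinarith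
    have h2 : ((a*b-1)*(k+1) + (a-1)*(b-1)) / ((a+b+k)*(k+1)) ≤ 2 * (a*b) / (k+1) := by
      rw [div_le_div_iff₀ (by positivity) (by positivity)]
      have hk : (0:ℝ) ≤ k := Nat.cast_nonneg k
      have : ((a*b-1)*(k+1) + (a-1)*(b-1)) ≤ 2 * (a*b) * (a+b+k) := by
        have : 0 ≤ a * b * k := by positivity
        nlinarith
      nlinarith
    have h3 : 0 ≤ ((a*b-1)*(k+1) + (a-1)*(b-1)) / ((a+b+k)*((k:ℝ)+1)) := by
      have : 0 ≤ a * b - 1 := by linarith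
      have : 0 ≤ (a-1)*(b-1) := mul_nonneg (by linarith) (by linarith)
      positivity
    calc _ ≤ C / (k+1) * (2 * (a*b) / (k+1)) := mul_le_mul h1 h2 h3 (by positivity)
      _ = _ := by simp only [N]; field_simp
  have hanti : Antitone (fun k : ℕ => ((k:ℝ)+1) * cA a b k + 2 * N * (1 / ((k:ℝ)+1))) := by
    apply antitone_nat_of_succ_le
    intro k
    have h1 := hd k
    have h2 : N / ((k:ℝ)+1)^2 ≤ 2 * N * (1 / ((k:ℝ)+1)) - 2 * N * (1 / ((k:ℝ)+2)) := by
      have : 2 * N * (1 / ((k:ℝ)+1)) - 2 * N * (1 / ((k:ℝ)+2)) = N * (2 / ((k+1)*(k+2))) := by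
        field_simp; ring
      rw [this, div_eq_mul_one_div]
      apply mul_le_mul_of_nonneg_left _ hN0
      rw [div_le_div_iff₀ (by positivity) (by positivity)]
      have hk : (0:ℝ) ≤ k := Nat.cast_nonneg k
      nlinarith
    push_cast
    rw [show (k:ℝ)+1+1 = k+2 by ring]
    linarith
  have hlim : Tendsto (fun k : ℕ => ((k:ℝ)+1) * cA a b k + 2 * N * (1 / ((k:ℝ)+1))) atTop
      (nhds (C + 2 * N * 0)) :=
    (c_tendsto ha hb).add (tendsto_one_div_add_atTop_nhds_zero_nat.const_mul _)
  have hs : Summable (fun k : ℕ => 2 * N * (1 / (((k+1:ℕ):ℝ))^2)) :=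
    (((summable_nat_add_iff 1).2 (Real.summable_one_div_nat_pow.2 (by norm_num : 1 < 2)))).mul_left _
  apply Summable.of_nonneg_of_le _ _ hs
  · intro k
    exact mul_nonneg (sub_nonneg.2 (c_le ha hb k)) (by positivity)
  · intro k
    have h1 := hanti.le_of_tendsto hlim k
    simp only [mul_zero, add_zero] at h1
    unfold cE
    rw [← hC]
    calc _ ≤ (2 * N * (1 / ((k:ℝ)+1))) * (1 / ((k:ℝ)+1)) := by gcongr; linarith
      _ = _ := by push_cast; field_simp

lemma hyper_eq (a b : ℝ) (z : ℂ) :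
    z * hyperF a b (a + b) z = ∑' k : ℕ, (cA a b k : ℂ) * z ^ (k+1) := by
  unfold hyperF
  rw [← tsum_mul_left]
  congr 1; ext k
  unfold cA
  rw [pow_succ]; ring

lemma hyper_decomp {a b : ℝ} (ha : 1 ≤ a) (hb : 1 ≤ b) (hq : (a-1)*(b-1) ≤ 2) {z : ℂ} (hz : ‖z‖ < 1) :
    (z * hyperF a b (a + b) z).im =
      -(Real.Gamma (a+b) / (Real.Gamma a * Real.Gamma b)) * (1 - z).arg
        - (∑' k : ℕ, (cE a b k : ℂ) * z ^ (k+1)).im := by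
  set C := Real.Gamma (a+b) / (Real.Gamma a * Real.Gamma b) with hC
  have hE := cE_NDC ha hb hq
  have hub : ∀ k, |cE a b k| ≤ cE a b 0 := fun k => by
    rw [abs_of_nonneg (hE.1 k)]; exact hE.le_zero k
  have H := ((Complex.hasSum_taylorSeries_neg_log' hz).mul_left (C:ℂ)).sub
    (summable_pow_mul hub hz).hasSum
  have e : z * hyperF a b (a + b) z =
      (C:ℂ) * (-Complex.log (1 - z)) - ∑' k : ℕ, (cE a b k : ℂ) * z ^ (k+1) := by
    rw [hyper_eq, ← H.tsum_eq]
    congr 1; ext k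
    rw [cE_eq, ← hC]
    push_cast
    ring
  rw [e, Complex.sub_im, Complex.im_ofReal_mul, Complex.neg_im, Complex.log_im]
  ring

lemma im_tsum_conj {u : ℕ → ℝ} {M : ℝ} (hu : ∀ k, |u k| ≤ M) {z : ℂ} (hz : ‖z‖ < 1) :
    (∑' k : ℕ, (u k : ℂ) * (starRingEnd ℂ z) ^ (k+1)).im
      = -(∑' k : ℕ, (u k : ℂ) * z ^ (k+1)).im := by
  rw [Complex.im_tsum (summable_pow_mul hu hz),
    Complex.im_tsum (summable_pow_mul hu (by rwa [RCLike.norm_conj])), ← tsum_neg]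
  congr 1; ext k
  rw [Complex.im_ofReal_mul, Complex.im_ofReal_mul, ← map_pow, Complex.conj_im]
  ring

lemma hyper_main {a b : ℝ} (ha : 1 ≤ a) (hb : 1 ≤ b) (hq : (a-1)*(b-1) ≤ 2)
    (hP : a * b ≤ a + b)
    (hk0 : a * b ≤ (a + b - a * b) * (2 * (a+b) + 2 - a * b)) :
    sSup ((fun z : ℂ => (z * hyperF a b (a + b) z).im) '' Metric.ball (0 : ℂ) 1) =
      Real.Gamma (a+b) / (Real.Gamma a * Real.Gamma b) * (Real.pi / 2) := by
  set C := Real.Gamma (a+b) / (Real.Gamma a * Real.Gamma b) with hC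
  have hC0 : 0 < C := by
    have pa := Real.Gamma_pos_of_pos (show 0 < a by linarith)
    have pb := Real.Gamma_pos_of_pos (show 0 < b by linarith)
    have pc := Real.Gamma_pos_of_pos (show 0 < a + b by linarith)
    positivity
  have hpi := Real.pi_pos
  have hE := cE_NDC ha hb hq
  have hA := cA_NDC ha hb hP hk0
  apply csSup_eq_of_forall_le_of_forall_lt_exists_gt
  · exact ⟨_, 0, by simp, rfl⟩
  · rintro _ ⟨z, hz, rfl⟩
    have hz : ‖z‖ < 1 := by simpa using hz
    show (z * hyperF a b (a + b) z).im ≤ _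
    rcases le_total 0 z.im with him | him
    · rw [hyper_decomp ha hb hq hz, ← hC]
      have h1 := im_nonneg_of_NDC hE hz him
      have hre : 0 < (1 - z).re := by
        have := (Complex.re_le_norm z)
        rw [Complex.sub_re, Complex.one_re]; linarith
      have h2 : -(Real.pi/2) ≤ (1 - z).arg := by
        have := Complex.abs_arg_le_pi_div_two_iff.2 hre.le
        exact (abs_le.1 this).1
      nlinarith
    · rw [hyper_eq]
      have hub : ∀ k, |cA a b k| ≤ cA a b 0 := fun k => by
        rw [abs_of_nonneg (hA.1 k)]; exact hA.le_zero k
      have h1 := im_nonneg_of_NDC hA (z := starRingEnd ℂ z) (by rwa [RCLike.norm_conj])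
        (by rw [Complex.conj_im]; linarith)
      rw [im_tsum_conj hub hz] at h1
      have : 0 ≤ C * (Real.pi / 2) := by positivity
      linarith
  · intro w hw
    obtain ⟨φ, hφ1, hφ2⟩ : ∃ φ, max (w / C) 0 < φ ∧ φ < Real.pi / 2 := by
      apply exists_between
      apply max_lt _ (by positivity)
      rw [div_lt_iff₀ hC0]; linarith
    have hφ0 : 0 < φ := lt_of_le_of_lt (le_max_right _ _) hφ1
    have hφw : w < C * φ := by
      have := lt_of_le_of_lt (le_max_left _ _) hφ1
      rw [div_lt_iff₀ hC0] at this; linarith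
    have hcos : 0 < Real.cos φ := Real.cos_pos_of_mem_Ioo ⟨by linarith, hφ2⟩
    let ζ : ℝ → ℂ := fun s => 1 - (s:ℂ) * (Complex.cos ((-φ : ℝ):ℂ) + Complex.sin ((-φ:ℝ):ℂ) * Complex.I)
    have hζc : Continuous ζ := by fun_prop
    have hζ0 : ζ 0 = 1 := by simp [ζ]
    have hnorm : ∀ s : ℝ, 0 < s → s < 2 * Real.cos φ → ‖ζ s‖ < 1 := by
      intro s hs hs2
      have hsq : ‖ζ s‖^2 < 1 := by
        rw [← Complex.normSq_eq_norm_sq, Complex.normSq_apply]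
        have e1 : (ζ s).re = 1 - s * Real.cos φ := by
          simp only [ζ, ← Complex.ofReal_cos, ← Complex.ofReal_sin]
          simp [-Complex.ofReal_cos, -Complex.ofReal_sin]
        have e2 : (ζ s).im = s * Real.sin φ := by
          simp only [ζ, ← Complex.ofReal_cos, ← Complex.ofReal_sin]
          simp [-Complex.ofReal_cos, -Complex.ofReal_sin]
        rw [e1, e2]
        have e3 : (1 - s * Real.cos φ) * (1 - s * Real.cos φ) + s * Real.sin φ * (s * Real.sin φ)
            = 1 - s * (2 * Real.cos φ - s) := by
          linear_combination s^2 * Real.sin_sq_add_cos_sq φ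
        rw [e3]
        have := mul_pos hs (sub_pos.2 hs2)
        linarith
      nlinarith [norm_nonneg (ζ s)]
    have hev : ∀ᶠ s in nhdsWithin (0:ℝ) (Set.Ioi 0), s ∈ Set.Ioo 0 (2 * Real.cos φ) :=
      Ioo_mem_nhdsGT (by positivity)
    have hg : ContinuousOn (fun z : ℂ => ∑' k : ℕ, (cE a b k : ℂ) * z ^ (k+1)) (Metric.closedBall 0 1) := by
      apply continuousOn_tsum _ (cE_summable ha hb)
      · intro n z hz
        have hz : ‖z‖ ≤ 1 := by simpa using hz
        rw [norm_mul, norm_pow, Complex.norm_real, Real.norm_eq_abs, abs_of_nonneg (hE.1 n)]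
        exact mul_le_of_le_one_right (hE.1 n) (pow_le_one₀ (norm_nonneg _) hz)
      · intro n; fun_prop
    have hg1 : (∑' k : ℕ, (cE a b k : ℂ) * (1:ℂ) ^ (k+1)).im = 0 := by
      simp only [one_pow, mul_one]
      rw [← Complex.ofReal_tsum, Complex.ofReal_im]
    have ht : Tendsto ζ (nhdsWithin (0:ℝ) (Set.Ioi 0)) (nhdsWithin 1 (Metric.closedBall 0 1)) := by
      rw [tendsto_nhdsWithin_iff]
      refine ⟨?_, ?_⟩
      · have := hζc.tendsto 0
        rw [hζ0] at this
        exact this.mono_left nhdsWithin_le_nhds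
      · filter_upwards [hev] with s hs
        simpa using (hnorm s hs.1 hs.2).le
    have ht2 := (hg 1 (by simp)).tendsto.comp ht
    have ht3 := (Complex.continuous_im.tendsto _).comp ht2
    rw [hg1] at ht3
    have hev2 := ht3.eventually (gt_mem_nhds (show (0:ℝ) < C * φ - w by linarith))
    obtain ⟨s, hs, hs2⟩ := (hev.and hev2).exists
    have hn := hnorm s hs.1 hs.2
    refine ⟨_, ⟨ζ s, by simpa using hn, rfl⟩, ?_⟩
    show w < (ζ s * hyperF a b (a + b) (ζ s)).im
    rw [hyper_decomp ha hb hq hn, ← hC]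
    have harg : (1 - ζ s).arg = -φ := by
      have : 1 - ζ s = (s:ℂ) * (Complex.cos ((-φ : ℝ):ℂ) + Complex.sin ((-φ:ℝ):ℂ) * Complex.I) := by
        simp [ζ]
      rw [this]
      exact Complex.arg_mul_cos_add_sin_mul_I hs.1 ⟨by linarith, by linarith⟩
    rw [harg]
    simp only [Function.comp] at hs2
    linarith

theorem stmt_4 (a b : ℝ)
    (h : (a = 1 ∧ 1 ≤ b ∧ b ≤ 4) ∨
         (1 < a ∧ a ≤ b ∧ b ≤ 3 ∧ b ≤ 1 + a ∧ b ≤ 4 * a / (5 * a - 4))) :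
    sSup ((fun z : ℂ => (z * hyperF a b (a + b) z).im) '' Metric.ball (0 : ℂ) 1) =
      Real.pi / (2 * (Real.Gamma a * Real.Gamma b / Real.Gamma (a + b))) := by
  have hab : 1 ≤ a ∧ 1 ≤ b := by
    rcases h with ⟨h1, h2, h3⟩ | ⟨h1, h2, h3, h4, h5⟩
    · exact ⟨h1.ge, h2⟩
    · exact ⟨h1.le, by linarith⟩
  obtain ⟨ha, hb⟩ := hab
  have pa := Real.Gamma_pos_of_pos (show 0 < a by linarith)
  have pb := Real.Gamma_pos_of_pos (show 0 < b by linarith)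
  have pc := Real.Gamma_pos_of_pos (show 0 < a + b by linarith)
  have hR : Real.pi / (2 * (Real.Gamma a * Real.Gamma b / Real.Gamma (a + b)))
      = Real.Gamma (a+b) / (Real.Gamma a * Real.Gamma b) * (Real.pi / 2) := by
    field_simp
  rw [hR]
  rcases h with ⟨h1, h2, h3⟩ | ⟨h1, h2, h3, h4, h5⟩
  · subst h1
    apply hyper_main ha hb <;> nlinarith
  · rw [le_div_iff₀ (by linarith)] at h5
    have hP : a * b ≤ (4/5) * (a + b) := by linarith
    have ha2 : a ≤ 8/5 := by nlinarith
    have hq : (a-1)*(b-1) ≤ 2 := by nlinarith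
    apply hyper_main ha hb hq (by linarith)
    obtain ⟨P, hPd⟩ : ∃ P, P = a * b := ⟨_, rfl⟩
    obtain ⟨s, hsd⟩ : ∃ s, s = a + b - a * b := ⟨_, rfl⟩
    have hs : P / 4 ≤ s := by rw [hPd, hsd]; linarith
    have hS : a + b = s + P := by rw [hPd, hsd]; ring
    have hs1 : 1 - (a-1)*(b-1) = s := by rw [hsd]; ring
    have hP1 : 1 ≤ P := by rw [hPd]; nlinarith
    have hAM : 4 * P ≤ (s + P)^2 := by rw [← hS, hPd]; nlinarith [sq_nonneg (a-b)]
    rw [← hPd, hS]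
    have : 0 ≤ s := by linarith
    rcases le_total (4/3) P with h | h
    · nlinarith
    · have : 1/2 ≤ s := by nlinarith
      nlinarith
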